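/- For every l ≥ 0 and every integer k with τ_l + 2 ≤ k ≤ τ_{l+1}: S̄_{k−1} = 2l + 1 if and only if S_k = 0. -/

import Mathlib

noncomputable section

/-- The walk `S` associated with the sign sequence `X : {1,2,…} → {−1,1}`:
`S 0 = 0`, `S n = X 1 + ⋯ + X n`. -/
def cvWalk (X : ℕ → ℤ) (n : ℕ) : ℤ := ∑ j ∈ Finset.Icc 1 n, X j

/-- The crossing times of `S`: `τ 0 = 0` and
`τ (l+1) = min {i > τ l : S (i-1) * S (i+1) < 0}`. -/
def cvTau (X : ℕ → ℤ) : ℕ → ℕ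
  | 0 => 0
  | l + 1 => sInf {i : ℕ | cvTau X l < i ∧ cvWalk X (i - 1) * cvWalk X (i + 1) < 0}

/-- The increments of the Csaki–Vincze transform `S̄ = T(S)`:
`X̄ j = Σ_{l ≥ 0} (−1)^(l+1) · X 1 · X (j+1) · 1_{τ l + 1 ≤ j ≤ τ (l+1)}`
(the sum may be truncated to `l ≤ j` since `l ≤ τ l` whenever `τ l + 1 ≤ j`). -/
def cvXbar (X : ℕ → ℤ) (j : ℕ) : ℤ :=
  ∑ l ∈ Finset.range (j + 1),
    (-1 : ℤ) ^ (l + 1) * X 1 * X (j + 1) *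
      (if cvTau X l + 1 ≤ j ∧ j ≤ cvTau X (l + 1) then 1 else 0)

/-- The Csaki–Vincze transform `S̄ = T(S)`. -/
def cvSbar (X : ℕ → ℤ) (n : ℕ) : ℤ := ∑ j ∈ Finset.Icc 1 n, cvXbar X j

/-- `Ȳ`-type process of a walk `f`: `max_{0 ≤ k ≤ n} f k − f n`. -/
def cvYof (f : ℕ → ℤ) (n : ℕ) : ℤ :=
  (Finset.range (n + 1)).sup' Finset.nonempty_range_add_one f - f n

/-- `Ȳ n = max_{0 ≤ k ≤ n} S̄ k − S̄ n`. -/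
def cvYbar (X : ℕ → ℤ) (n : ℕ) : ℤ := cvYof (cvSbar X) n

/-!
A step of `S` lies either above or below `0`, and consecutive steps lie on opposite sides exactly at
the crossing times. Hence the steps between `τ l` and `τ (l+1)` all lie on the side
`(-1) ^ l * X 1`, so `S (τ l + 1) = (-1) ^ l * X 1`. Between these times `S̄` moves like
`-(-1) ^ l * X 1 * S`, shifted by one time unit. Over one whole block `S` goes from
`(-1) ^ l * X 1` to the opposite value, so `S̄` increases by `2`. Consequently
`S̄ n = 2 l + 1 - (-1) ^ l * X 1 * S (n + 1)` throughout the `l`-th block.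
-/

theorem sign_add_eq_sign_left_of_abs_sub_le_one {a b : ℤ} (hab : |b - a| ≤ 1) (ha : a ≠ 0) :
    (a + b).sign = a.sign := by
  obtain ⟨hlo, hhi⟩ := abs_le.1 hab
  rcases lt_or_gt_of_ne ha with hneg | hpos
  · rw [Int.sign_eq_neg_one_of_neg hneg, Int.sign_eq_neg_one_of_neg (by omega)]
  · rw [Int.sign_eq_one_of_pos hpos, Int.sign_eq_one_of_pos (by omega)]

theorem sign_add_eq_sign_right_of_abs_sub_le_one {a b : ℤ} (hab : |b - a| ≤ 1) (hb : b ≠ 0) :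
    (a + b).sign = b.sign := by
  rw [add_comm, sign_add_eq_sign_left_of_abs_sub_le_one (abs_sub_comm b a ▸ hab) hb]

theorem eq_zero_of_abs_sub_le_one_of_mul_neg {a b c : ℤ} (hab : |b - a| ≤ 1) (hbc : |c - b| ≤ 1)
    (hac : a * c < 0) : b = 0 := by
  rw [abs_le] at hab hbc
  rcases mul_neg_iff.1 hac with h | h <;> omega

theorem isUnit_neg_one_pow_mul {M : Type*} [Monoid M] [HasDistribNeg M] {x : M} (hx : IsUnit x)
    (n : ℕ) : IsUnit ((-1) ^ n * x) :=
  (isUnit_one.neg.pow n).mul hx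

/-- The set of times `i ≥ 1` at which the walk `S` crosses `0`, i.e. `S (i-1)` and `S (i+1)` have
strictly opposite signs. When it is infinite, its elements in increasing order are `τ 1, τ 2, …`. -/
def cvCrossings (X : ℕ → ℤ) : Set ℕ :=
  {i | 1 ≤ i ∧ cvWalk X (i - 1) * cvWalk X (i + 1) < 0}

/-- The side of `0` (as a sign) on which the step of the walk `S` from time `n` to time `n + 1`
lies, encoded as the sign of twice its midpoint. -/
def cvStepSide (X : ℕ → ℤ) (n : ℕ) : ℤ := (cvWalk X n + cvWalk X (n + 1)).sign

section Walk

variable {X : ℕ → ℤ}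

@[simp]
theorem cvWalk_zero : cvWalk X 0 = 0 := by simp [cvWalk]

theorem cvWalk_succ (n : ℕ) : cvWalk X (n + 1) = cvWalk X n + X (n + 1) :=
  Finset.sum_Icc_succ_top (by omega) X

theorem abs_cvWalk_succ_sub_le_one (hX : ∀ n, IsUnit (X (n + 1))) (n : ℕ) :
    |cvWalk X (n + 1) - cvWalk X n| ≤ 1 := by
  rw [cvWalk_succ, add_sub_cancel_left, Int.isUnit_iff_abs_eq.1 (hX n)]

theorem succ_mem_cvCrossings {n : ℕ} :
    n + 1 ∈ cvCrossings X ↔ cvWalk X n * cvWalk X (n + 2) < 0 := by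
  simp [cvCrossings]

theorem cvWalk_eq_zero_of_mem_cvCrossings (hX : ∀ n, IsUnit (X (n + 1))) {i : ℕ}
    (hi : i ∈ cvCrossings X) : cvWalk X i = 0 := by
  obtain ⟨n, rfl⟩ := Nat.exists_eq_add_of_le' hi.1
  exact eq_zero_of_abs_sub_le_one_of_mul_neg (abs_cvWalk_succ_sub_le_one hX n)
    (abs_cvWalk_succ_sub_le_one hX (n + 1)) (succ_mem_cvCrossings.1 hi)

theorem cvStepSide_of_cvWalk_eq_zero (hX : ∀ n, IsUnit (X (n + 1))) {n : ℕ}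
    (hn : cvWalk X n = 0) : cvStepSide X n = X (n + 1) := by
  rw [cvStepSide, cvWalk_succ, hn, zero_add, zero_add]
  rcases Int.isUnit_iff.1 (hX n) with h | h <;> simp [h]

theorem cvStepSide_of_cvWalk_succ_eq_zero (hX : ∀ n, IsUnit (X (n + 1))) {n : ℕ}
    (hn : cvWalk X (n + 1) = 0) : cvStepSide X n = -X (n + 1) := by
  have hwalk : cvWalk X n = -X (n + 1) := eq_neg_of_add_eq_zero_left (cvWalk_succ n ▸ hn)
  rw [cvStepSide, hn, hwalk, add_zero]
  rcases Int.isUnit_iff.1 (hX n) with h | h <;> simp [h]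

theorem succ_mem_cvCrossings_iff_of_cvWalk_succ_eq_zero {n : ℕ} (hn : cvWalk X (n + 1) = 0) :
    n + 1 ∈ cvCrossings X ↔ 0 < X (n + 1) * X (n + 2) := by
  have hleft : cvWalk X n = -X (n + 1) := eq_neg_of_add_eq_zero_left (cvWalk_succ n ▸ hn)
  have hright : cvWalk X (n + 2) = X (n + 2) := by rw [cvWalk_succ, hn, zero_add]
  rw [succ_mem_cvCrossings, hleft, hright, neg_mul, neg_lt_zero]

theorem cvStepSide_succ_of_mem_cvCrossings (hX : ∀ n, IsUnit (X (n + 1))) {n : ℕ}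
    (hn : n + 1 ∈ cvCrossings X) : cvStepSide X (n + 1) = -cvStepSide X n := by
  have hzero := cvWalk_eq_zero_of_mem_cvCrossings hX hn
  have hpos := (succ_mem_cvCrossings_iff_of_cvWalk_succ_eq_zero hzero).1 hn
  have hsame : X (n + 2) = X (n + 1) := by
    rcases Int.isUnit_iff.1 (hX n) with h | h <;>
      rcases Int.isUnit_iff.1 (hX (n + 1)) with h' | h' <;> simp_all
  rw [cvStepSide_of_cvWalk_eq_zero hX hzero, cvStepSide_of_cvWalk_succ_eq_zero hX hzero, neg_neg,
    hsame]

theorem cvStepSide_succ_of_notMem_cvCrossings (hX : ∀ n, IsUnit (X (n + 1))) {n : ℕ}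
    (hn : n + 1 ∉ cvCrossings X) : cvStepSide X (n + 1) = cvStepSide X n := by
  by_cases hzero : cvWalk X (n + 1) = 0
  · rw [succ_mem_cvCrossings_iff_of_cvWalk_succ_eq_zero hzero] at hn
    have hopp : X (n + 2) = -X (n + 1) := by
      rcases Int.isUnit_iff.1 (hX n) with h | h <;>
        rcases Int.isUnit_iff.1 (hX (n + 1)) with h' | h' <;> simp_all
    rw [cvStepSide_of_cvWalk_eq_zero hX hzero, cvStepSide_of_cvWalk_succ_eq_zero hX hzero, hopp]
  · rw [cvStepSide, cvStepSide,
      sign_add_eq_sign_left_of_abs_sub_le_one (abs_cvWalk_succ_sub_le_one hX (n + 1)) hzero,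
      sign_add_eq_sign_right_of_abs_sub_le_one (abs_cvWalk_succ_sub_le_one hX n) hzero]

end Walk

section CrossingTimes

variable {X : ℕ → ℤ}

@[simp]
theorem cvTau_zero : cvTau X 0 = 0 := by rw [cvTau]

theorem cvTau_succ (l : ℕ) : cvTau X (l + 1) = sInf {i ∈ cvCrossings X | cvTau X l < i} := by
  rw [cvTau]
  congr 1
  ext i
  simp only [cvCrossings, Set.mem_ofPred_eq]
  exact ⟨fun h => ⟨⟨by omega, h.2⟩, h.1⟩, fun h => ⟨h.2, h.1.2⟩⟩

theorem cvTau_succ_mem (hinf : (cvCrossings X).Infinite) (l : ℕ) :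
    cvTau X (l + 1) ∈ {i ∈ cvCrossings X | cvTau X l < i} := by
  rw [cvTau_succ]
  exact Nat.sInf_mem (hinf.exists_gt (cvTau X l))

theorem cvTau_strictMono (hinf : (cvCrossings X).Infinite) : StrictMono (cvTau X) :=
  strictMono_nat_of_lt_succ fun l => (cvTau_succ_mem hinf l).2

theorem notMem_cvCrossings_of_lt_cvTau_succ {l i : ℕ} (hl : cvTau X l < i)
    (hu : i < cvTau X (l + 1)) : i ∉ cvCrossings X := fun hi =>
  hu.not_ge (cvTau_succ (X := X) l ▸ Nat.sInf_le ⟨hi, hl⟩)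

theorem cvWalk_cvTau (hX : ∀ n, IsUnit (X (n + 1))) (hinf : (cvCrossings X).Infinite) :
    ∀ l, cvWalk X (cvTau X l) = 0
  | 0 => by simp
  | l + 1 => cvWalk_eq_zero_of_mem_cvCrossings hX (cvTau_succ_mem hinf l).1

theorem cvStepSide_eq_cvStepSide_cvTau (hX : ∀ n, IsUnit (X (n + 1))) {l n : ℕ}
    (hl : cvTau X l ≤ n) (hu : n < cvTau X (l + 1)) :
    cvStepSide X n = cvStepSide X (cvTau X l) := by
  induction n, hl using Nat.le_induction with
  | base => rfl
  | succ n hl ih =>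
    have hnot : n + 1 ∉ cvCrossings X := notMem_cvCrossings_of_lt_cvTau_succ (by omega) hu
    rw [cvStepSide_succ_of_notMem_cvCrossings hX hnot, ih (by omega)]

theorem cvStepSide_cvTau (hX : ∀ n, IsUnit (X (n + 1))) (hinf : (cvCrossings X).Infinite)
    (l : ℕ) : cvStepSide X (cvTau X l) = (-1) ^ l * X 1 := by
  induction l with
  | zero => simp [cvStepSide_of_cvWalk_eq_zero hX]
  | succ l ih =>
    obtain ⟨hmem, hlt⟩ := cvTau_succ_mem hinf l
    obtain ⟨n, hn⟩ := Nat.exists_eq_add_of_le' hmem.1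
    calc cvStepSide X (cvTau X (l + 1)) = -cvStepSide X n := by
          rw [hn, cvStepSide_succ_of_mem_cvCrossings hX (hn ▸ hmem)]
      _ = -cvStepSide X (cvTau X l) := by
          rw [cvStepSide_eq_cvStepSide_cvTau hX (l := l) (by omega) (by omega)]
      _ = (-1) ^ (l + 1) * X 1 := by rw [ih, pow_succ]; ring

theorem cvWalk_cvTau_add_one (hX : ∀ n, IsUnit (X (n + 1))) (hinf : (cvCrossings X).Infinite)
    (l : ℕ) : cvWalk X (cvTau X l + 1) = (-1) ^ l * X 1 := by
  have hzero := cvWalk_cvTau hX hinf l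
  rw [cvWalk_succ, hzero, zero_add, ← cvStepSide_of_cvWalk_eq_zero hX hzero,
    cvStepSide_cvTau hX hinf]

end CrossingTimes

section Transform

variable {X : ℕ → ℤ}

@[simp]
theorem cvSbar_zero : cvSbar X 0 = 0 := by simp [cvSbar]

theorem cvSbar_succ (n : ℕ) : cvSbar X (n + 1) = cvSbar X n + cvXbar X (n + 1) :=
  Finset.sum_Icc_succ_top (by omega) (cvXbar X)

theorem cvXbar_of_mem_Ioc (hτ : StrictMono (cvTau X)) {l j : ℕ}
    (hj : j ∈ Set.Ioc (cvTau X l) (cvTau X (l + 1))) :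
    cvXbar X j = (-1) ^ (l + 1) * X 1 * X (j + 1) := by
  simp_rw [cvXbar, Nat.add_one_le_iff, ← Set.mem_Ioc]
  rw [Finset.sum_eq_single l]
  · rw [if_pos hj, mul_one]
  · intro m _ hml
    have hdisj : Disjoint (Set.Ioc (cvTau X m) (cvTau X (m + 1)))
        (Set.Ioc (cvTau X l) (cvTau X (l + 1))) :=
      hτ.monotone.pairwise_disjoint_on_Ioc_succ hml
    rw [if_neg fun hm => Set.disjoint_left.1 hdisj hm hj, mul_zero]
  · intro hl
    have hlj : l ≤ j := hτ.le_apply.trans hj.1.le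
    exact absurd (Finset.mem_range.2 (by omega)) hl

theorem cvSbar_sub_cvSbar_cvTau (hτ : StrictMono (cvTau X)) {l n : ℕ}
    (hl : cvTau X l ≤ n) (hu : n ≤ cvTau X (l + 1)) :
    cvSbar X n - cvSbar X (cvTau X l) =
      (-1) ^ (l + 1) * X 1 * (cvWalk X (n + 1) - cvWalk X (cvTau X l + 1)) := by
  induction n, hl using Nat.le_induction with
  | base => ring
  | succ n hl ih =>
    rw [cvSbar_succ, cvXbar_of_mem_Ioc hτ ⟨by omega, hu⟩, cvWalk_succ (n + 1)]
    linear_combination ih (by omega)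

theorem cvSbar_cvTau (hX : ∀ n, IsUnit (X (n + 1))) (hinf : (cvCrossings X).Infinite) (l : ℕ) :
    cvSbar X (cvTau X l) = 2 * l := by
  induction l with
  | zero => simp
  | succ l ih =>
    have hτ := cvTau_strictMono hinf
    have hblock := cvSbar_sub_cvSbar_cvTau hτ (hτ l.lt_add_one).le le_rfl
    rw [cvWalk_cvTau_add_one hX hinf, cvWalk_cvTau_add_one hX hinf, ih] at hblock
    push_cast
    linear_combination hblock + 2 * Int.isUnit_mul_self (isUnit_neg_one_pow_mul (hX 0) l)

theorem cvSbar_eq_sub_cvWalk (hX : ∀ n, IsUnit (X (n + 1))) (hinf : (cvCrossings X).Infinite)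
    {l n : ℕ} (hl : cvTau X l ≤ n) (hu : n ≤ cvTau X (l + 1)) :
    cvSbar X n = 2 * l + 1 - (-1) ^ l * X 1 * cvWalk X (n + 1) := by
  have hblock := cvSbar_sub_cvSbar_cvTau (cvTau_strictMono hinf) hl hu
  rw [cvSbar_cvTau hX hinf, cvWalk_cvTau_add_one hX hinf] at hblock
  linear_combination hblock + Int.isUnit_mul_self (isUnit_neg_one_pow_mul (hX 0) l)

end Transform

/-- For every `l ≥ 0` and every `k` with `τ l + 2 ≤ k ≤ τ (l+1)`:
`S̄ (k−1) = 2l + 1` if and only if `S k = 0`. -/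
theorem cv_sbar_eq_odd_iff_walk_zero (X : ℕ → ℤ) (hX : ∀ j, 1 ≤ j → X j = 1 ∨ X j = -1)
    (hinf : {i : ℕ | 1 ≤ i ∧ cvWalk X (i - 1) * cvWalk X (i + 1) < 0}.Infinite)
    (l k : ℕ) (hk1 : cvTau X l + 2 ≤ k) (hk2 : k ≤ cvTau X (l + 1)) :
    cvSbar X (k - 1) = 2 * l + 1 ↔ cvWalk X k = 0 := by
  have hunit : ∀ n, IsUnit (X (n + 1)) := fun n => Int.isUnit_iff.2 (hX _ n.succ_pos)
  have hside : (-1) ^ l * X 1 ≠ 0 := (isUnit_neg_one_pow_mul (hunit 0) l).ne_zero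
  obtain ⟨n, rfl⟩ : ∃ n, k = n + 1 := Nat.exists_eq_add_of_le' (by omega)
  rw [Nat.add_sub_cancel, cvSbar_eq_sub_cvWalk (l := l) hunit hinf (by omega) (by omega),
    sub_eq_self, mul_eq_zero_iff_left hside]
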